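/- arXiv:2504.04821 — 2 statements merged into one kernel-verified Lean document; each statement's English description precedes it below -/
import Mathlib

section
/- (The Mycielskian preserves the clique number.) Let G be a simple graph on a finite vertex set with at least one edge. Then the Mycielskian μ(G) has the same clique number as G, i.e., ω(μ(G)) = ω(G). -/
open SimpleGraph

/-- The Mycielskian of a simple graph `G` on vertex set `V`: its vertex set is
`V ⊕ V ⊕ Unit` (a first copy of `V`, a second copy of `V`, and an extra vertex `w`),
with edges `u_x u_y` and `u_x v_y` for every edge `{x,y}` of `G`,
and `v_x w` for every `x ∈ V`. -/
def SimpleGraph.mycielskian {V : Type*} (G : SimpleGraph V) :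
    SimpleGraph (V ⊕ V ⊕ Unit) :=
  SimpleGraph.fromRel (fun a b =>
    match a, b with
    | Sum.inl x, Sum.inl y => G.Adj x y
    | Sum.inl x, Sum.inr (Sum.inl y) => G.Adj x y
    | Sum.inr (Sum.inl _), Sum.inr (Sum.inr _) => True
    | _, _ => False)

/-!
Two vertices of `μ(G)` other than `w` that are adjacent lie over adjacent vertices of `G`, so
deleting `w` leaves a graph that maps homomorphically to `G`; as homomorphisms are injective on
cliques, no new clique size arises there. The neighbours of `w` form an independent set, so the
cliques through `w` have at most two vertices, and an edge of `G` accounts for those sizes.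
-/

section CliqueFree

variable {V W : Type*} {G : SimpleGraph V} {H : SimpleGraph W}

theorem cliqueFree_of_hom {n : ℕ} (f : G →g H) (hH : H.CliqueFree n) : G.CliqueFree n := by
  contrapose! hH
  let g : completeGraph (Fin n) →g H := f.comp (topEmbeddingOfNotCliqueFree hH).toHom
  exact IsContained.not_cliqueFree ⟨g, g.injective_of_top_hom⟩

theorem cliqueNum_eq_of_cliqueFree_iff (h : ∀ n, G.CliqueFree n ↔ H.CliqueFree n) :
    G.cliqueNum = H.cliqueNum := by
  refine congrArg sSup (Set.ext fun n => ?_)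
  simpa only [Set.mem_ofPred_eq, CliqueFree, not_forall, not_not] using not_congr (h n)

theorem card_le_two_of_isIndepSet_neighborSet {a : V} (ha : G.IsIndepSet (G.neighborSet a))
    {s : Finset V} (hs : G.IsClique s) (has : a ∈ s) : s.card ≤ 2 := by
  classical
  have inter_subsingleton : ((s : Set V) ∩ G.neighborSet a).Subsingleton :=
    inter_subsingleton_of_isChain_of_isAntichain
      ((isClique_iff_isChain_adj G).mp hs) ((isIndepSet_iff_isAntichain_adj G).mp ha)
  have erase_subset : ∀ b ∈ s.erase a, b ∈ (s : Set V) ∩ G.neighborSet a := fun b hb =>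
    have ⟨hba, hbs⟩ := Finset.mem_erase.mp hb
    ⟨hbs, hs has hbs hba.symm⟩
  have card_erase_le : (s.erase a).card ≤ 1 := Finset.card_le_one.mpr fun b hb c hc =>
    inter_subsingleton (erase_subset b hb) (erase_subset c hc)
  have := Finset.card_erase_add_one has
  omega

theorem not_cliqueFree_two_of_edgeSet_nonempty (hE : G.edgeSet.Nonempty) : ¬G.CliqueFree 2 := by
  rwa [cliqueFree_two, ← edgeSet_eq_empty, ← ne_eq, ← Set.nonempty_iff_ne_empty]

end CliqueFree

section Mycielskian

variable {V : Type*} {G : SimpleGraph V}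

/-- The extra vertex `w` of the Mycielskian of a graph on `V`. -/
abbrev mycielskianApex (V : Type*) : V ⊕ V ⊕ Unit := Sum.inr (Sum.inr ())

theorem mycielskian_adj_inl_inl {x y : V} :
    G.mycielskian.Adj (Sum.inl x) (Sum.inl y) ↔ G.Adj x y := by
  simpa [mycielskian, G.adj_comm y x] using Adj.ne

theorem mycielskian_adj_inl_inr_inl {x y : V} :
    G.mycielskian.Adj (Sum.inl x) (Sum.inr (Sum.inl y)) ↔ G.Adj x y := by
  simp [mycielskian]

theorem not_mycielskian_adj_inr_inl_inr_inl {x y : V} :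
    ¬G.mycielskian.Adj (Sum.inr (Sum.inl x)) (Sum.inr (Sum.inl y)) := by
  simp [mycielskian]

theorem neighborSet_mycielskianApex :
    G.mycielskian.neighborSet (mycielskianApex V) = Set.range (Sum.inr ∘ Sum.inl) := by
  ext (x | x | _) <;> simp [mycielskian]

theorem isIndepSet_neighborSet_mycielskianApex :
    G.mycielskian.IsIndepSet (G.mycielskian.neighborSet (mycielskianApex V)) := by
  rw [neighborSet_mycielskianApex]
  rintro _ ⟨x, rfl⟩ _ ⟨y, rfl⟩ _
  exact not_mycielskian_adj_inr_inl_inr_inl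

variable (G) in
/-- The inclusion of `G` in its Mycielskian as the first copy. -/
def mycielskianInl : G →g G.mycielskian where
  toFun := Sum.inl
  map_rel' := mycielskian_adj_inl_inl.mpr

variable (G) in
/-- The projection onto `G` of its Mycielskian with the extra vertex `w` deleted, which forgets
the copy of `V` that a vertex lies in. -/
def mycielskianProj : G.mycielskian.induce {mycielskianApex V}ᶜ →g G where
  toFun
    | ⟨Sum.inl x, _⟩ => x
    | ⟨Sum.inr (Sum.inl x), _⟩ => x
    | ⟨Sum.inr (Sum.inr ()), h⟩ => (h rfl).elim
  map_rel' := by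
    rintro ⟨x | x | _, ha⟩ ⟨y | y | _, hb⟩ hab
    · exact mycielskian_adj_inl_inl.mp hab
    · exact mycielskian_adj_inl_inr_inl.mp hab
    · exact (hb rfl).elim
    · exact (mycielskian_adj_inl_inr_inl.mp hab.symm).symm
    · exact (not_mycielskian_adj_inr_inl_inr_inl (G := G) hab).elim
    · exact (hb rfl).elim
    all_goals exact (ha rfl).elim

theorem mycielskian_cliqueFree_of_two_lt {n : ℕ} (hn : 2 < n) (hG : G.CliqueFree n) :
    G.mycielskian.CliqueFree n := by
  intro s hs
  have apex_notMem : mycielskianApex V ∉ s := fun hw =>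
    have card_le_two := card_le_two_of_isIndepSet_neighborSet
      isIndepSet_neighborSet_mycielskianApex hs.isClique hw
    absurd (hs.card_eq ▸ card_le_two) hn.not_ge
  have cliqueFreeOn : G.mycielskian.CliqueFreeOn {mycielskianApex V}ᶜ n :=
    (cliqueFree_induce_iff _ _ n).mp (cliqueFree_of_hom (mycielskianProj G) hG)
  exact cliqueFreeOn (Set.subset_compl_singleton_iff.mpr apex_notMem) hs

end Mycielskian

/-- On an infinite vertex set `cliqueNum` is `0` when clique sizes are unbounded, so the comparison
is made size by size. -/
theorem mycielskian_cliqueNum_general {V : Type*} (G : SimpleGraph V) (hE : G.edgeSet.Nonempty)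
    (n : ℕ) : G.mycielskian.CliqueFree n ↔ G.CliqueFree n := by
  refine ⟨cliqueFree_of_hom (mycielskianInl G), fun hG => ?_⟩
  have two_lt : 2 < n := by
    by_contra! hn
    exact not_cliqueFree_two_of_edgeSet_nonempty hE (hG.mono hn)
  exact mycielskian_cliqueFree_of_two_lt two_lt hG

/-- The Mycielskian preserves the clique number of any finite graph with at least
one edge. -/
theorem mycielskian_cliqueNum {V : Type*} [Fintype V] (G : SimpleGraph V)
    (hE : G.edgeSet.Nonempty) :
    G.mycielskian.cliqueNum = G.cliqueNum :=
  cliqueNum_eq_of_cliqueFree_iff (mycielskian_cliqueNum_general G hE)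
end

section
/- (Soundness of the Mycielskian lower bound.) Let G be a simple graph on a finite vertex set V, let S ⊆ V, and let H be the subgraph of G induced on S. Suppose χ(H) ≥ k and that there is an injective graph homomorphism from the Mycielskian μ(H) into G (i.e., μ(H) occurs as a subgraph of G). Then χ(G) ≥ k + 1. -/
open SimpleGraph

/-!
A coloring `c` of the Mycielskian `μ(H)` yields a coloring of `H` that avoids the color of the
apex `w`: color `x` by `c u_x`, unless `c u_x = c w`, in which case use `c v_x`, which differs from
`c w` since `v_x` is adjacent to `w`. Adjacent `x`, `y` are never both recolored, because
`c u_x ≠ c u_y`, and if only `x` is, then `c v_x ≠ c u_y` because `v_x` is adjacent to `u_y`. Hence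
`χ(H) + 1 ≤ χ(μ(H))`, and colorings of `G` pull back along homomorphisms `μ(H) →g G`.
-/

section Adjacency

variable {W : Type*} {H : SimpleGraph W} {x y : W}

theorem mycielskian_adj_inl_inl_s15 :
    H.mycielskian.Adj (.inl x) (.inl y) ↔ H.Adj x y := by
  simpa [SimpleGraph.mycielskian, H.adj_comm y x] using Adj.ne

theorem mycielskian_adj_inl_inr_inl_s15 :
    H.mycielskian.Adj (.inl x) (.inr (.inl y)) ↔ H.Adj x y := by
  simp [SimpleGraph.mycielskian]

theorem mycielskian_adj_inr_inl_inr_inr (x : W) :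
    H.mycielskian.Adj (.inr (.inl x)) (.inr (.inr ())) := by
  simp [SimpleGraph.mycielskian]

end Adjacency

section Recoloring

variable {W α : Type*} [DecidableEq α] {H : SimpleGraph W}

/-- The color given to `x` by a coloring `c` of the Mycielskian of `H`: that of `u_x`, or that of
`v_x` if `u_x` has the color of `w`. This colors `H` without the color of `w`. -/
def mycielskianRecolor (c : H.mycielskian.Coloring α) (x : W) : α :=
  if c (.inl x) = c (.inr (.inr ())) then c (.inr (.inl x)) else c (.inl x)

theorem mycielskianRecolor_ne_apex (c : H.mycielskian.Coloring α) (x : W) :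
    mycielskianRecolor c x ≠ c (.inr (.inr ())) := by
  unfold mycielskianRecolor
  split_ifs with hx
  · exact c.valid (mycielskian_adj_inr_inl_inr_inr x)
  · exact hx

theorem mycielskianRecolor_ne_of_adj (c : H.mycielskian.Coloring α) {x y : W} (hxy : H.Adj x y) :
    mycielskianRecolor c x ≠ mycielskianRecolor c y := by
  have base_ne : c (.inl x) ≠ c (.inl y) := c.valid (mycielskian_adj_inl_inl_s15.mpr hxy)
  unfold mycielskianRecolor
  split_ifs with hx hy hy
  · exact absurd (hx.trans hy.symm) base_ne
  · exact (c.valid (mycielskian_adj_inl_inr_inl_s15.mpr hxy.symm)).symm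
  · exact c.valid (mycielskian_adj_inl_inr_inl_s15.mpr hxy)
  · exact base_ne

/-- The map `mycielskianRecolor c` as a proper coloring of `H`; its color type is the subtype
without the color of `w`, so that it visibly has one color less than `c`. -/
def mycielskianRecoloring (c : H.mycielskian.Coloring α) :
    H.Coloring {a : α // a ≠ c (.inr (.inr ()))} :=
  Coloring.mk (fun x => ⟨mycielskianRecolor c x, mycielskianRecolor_ne_apex c x⟩)
    fun hxy => Subtype.coe_ne_coe.mp (mycielskianRecolor_ne_of_adj c hxy)

end Recoloring

section ChromaticNumber

variable {W : Type*} {H : SimpleGraph W}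

theorem colorable_of_mycielskian_colorable_succ {n : ℕ}
    (h : H.mycielskian.Colorable (n + 1)) : H.Colorable n := by
  obtain ⟨c⟩ := h
  simpa using (mycielskianRecoloring c).colorable

theorem chromaticNumber_add_one_le_mycielskian (H : SimpleGraph W) :
    H.chromaticNumber + 1 ≤ H.mycielskian.chromaticNumber := by
  refine le_iInf₂ fun n hn => ?_
  cases n with
  | zero => exact (colorable_zero_iff.mp hn).elim (.inr (.inr ()))
  | succ m =>
    push_cast
    gcongr
    exact (colorable_of_mycielskian_colorable_succ hn).chromaticNumber_le

theorem mycielskian_lower_bound_general {V : Type*} {G : SimpleGraph V}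
    (f : H.mycielskian →g G) : H.chromaticNumber + 1 ≤ G.chromaticNumber :=
  (chromaticNumber_add_one_le_mycielskian H).trans (chromaticNumber_mono_of_hom f)

end ChromaticNumber

/-- Soundness of the Mycielskian lower bound: if the subgraph `H` of `G` induced on `S`
has chromatic number at least `k` and the Mycielskian of `H` occurs as a subgraph of `G`
(via an injective graph homomorphism), then `χ(G) ≥ k + 1`. -/
theorem mycielskian_lower_bound {V : Type*} [Fintype V] (G : SimpleGraph V)
    (S : Set V) {k : ℕ}
    (hH : (k : ℕ∞) ≤ (G.induce S).chromaticNumber)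
    (f : (G.induce S).mycielskian →g G) (hf : Function.Injective f) :
    ((k : ℕ∞) + 1) ≤ G.chromaticNumber :=
  (add_le_add_left hH 1).trans (mycielskian_lower_bound_general f)
end
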